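/- Let 2 ≤ m < N be real numbers and let f : ℝ → ℝ be continuous with f(t) = 0 for t ≤ 0, and suppose there exist constants C > 0, δ > 0, t₀ > 0 such that 0 ≤ f(t) ≤ C·t^(m−1+δ) for all 0 < t ≤ t₀. Let w : (0,∞) → ℝ be continuously differentiable with w(r) > 0 and w′(r) < 0 for all r > 0 and w(r) → 0 as r → ∞, and suppose that for every r > 0 the function ρ ↦ ρ^(N−1)·|w′(ρ)|^(m−2)·w′(ρ) is differentiable at r with derivative equal to r^(N−1)·(w(r)^(m−1) − f(w(r))). Then there exists a constant C₀ > 0 such that lim_{r→∞} w(r)·r^((N−1)/(m(m−1)))·exp((1/(m−1))^(1/m)·r) = C₀. -/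

import Mathlib

open Real Filter Topology Set

/-!
With `(m - 1) λ ^ m = 1`, the normalised Riccati variable `Y = (-w' / (λ w)) ^ (m - 1)` turns the
equation into `Y' = (m - 1) λ (Y ^ (m / (m - 1)) - 1) - (N - 1) / r * Y + O(w ^ δ)`. The
equilibrium `Y = 1` is repelling, so a solution that stays positive for all large `r` must converge
to it: from above it would blow up in finite time, from below it would become negative. Testing the
equation with `Y - 1` shows moreover that `(Y - 1) ^ 2` is integrable at infinity.

The derivative of `log w + λ r + (N - 1) / (m (m - 1)) * log r` is, up to integrable terms, linear
in `Y - 1`, and so is that of `Y`. The right multiple of `Y` cancels the linear part, leaving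
`O((Y - 1) ^ 2 + r⁻² + w ^ δ)`, which is integrable. Hence the sum converges.
-/

open MeasureTheory Asymptotics

lemma isBigO_sub_sub_smul_deriv_of_analyticAt {𝕜 E : Type*} [NontriviallyNormedField 𝕜]
    [NormedAddCommGroup E] [NormedSpace 𝕜 E] {f : 𝕜 → E} {a : 𝕜} (hf : AnalyticAt 𝕜 f a) :
    (fun x ↦ f x - f a - (x - a) • deriv f a) =O[𝓝 a] fun x ↦ (x - a) ^ 2 := by
  obtain ⟨p, hp⟩ := hf
  have h : (fun x ↦ dslope f a x - deriv f a) =O[𝓝 a] fun x ↦ x - a := by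
    simpa only [dslope_same] using
      hp.has_fpower_series_dslope_fslope.differentiableAt.isBigO_sub
  refine ((isBigO_refl (fun x ↦ x - a) (𝓝 a)).smul h).congr (fun x ↦ ?_) fun x ↦ (sq _).symm
  rw [smul_sub, sub_smul_dslope]

lemma isBigO_rpow_sub_one_sub_mul (s : ℝ) :
    (fun x : ℝ ↦ x ^ s - 1 - s * (x - 1)) =O[𝓝 1] fun x ↦ (x - 1) ^ 2 := by
  have h : AnalyticAt ℝ (fun x : ℝ ↦ x ^ s) 1 :=
    (contDiffAt_rpow_const_of_ne one_ne_zero).analyticAt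
  simpa [mul_comm s] using isBigO_sub_sub_smul_deriv_of_analyticAt h

lemma eventually_atTop_eventually_nhds {α : Type*} [TopologicalSpace α] [LinearOrder α]
    [ClosedIicTopology α] [NoMaxOrder α] [Nonempty α] {P : α → Prop} (h : ∀ᶠ x in atTop, P x) :
    ∀ᶠ x in atTop, ∀ᶠ y in 𝓝 x, P y := by
  obtain ⟨a, ha⟩ := eventually_atTop.1 h
  filter_upwards [eventually_gt_atTop a] with x hx
  filter_upwards [Ioi_mem_nhds hx] with y hy using ha y hy.le

lemma tendsto_atTop_of_eventually_le_deriv {y y' : ℝ → ℝ} {k M : ℝ} (hk : 0 < k)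
    (hy : ∀ᶠ r in atTop, HasDerivAt y (y' r) r)
    (hgrowth : ∀ᶠ r in atTop, M ≤ y r → k ≤ y' r) (hM : ∃ᶠ r in atTop, M ≤ y r) :
    Tendsto y atTop atTop := by
  obtain ⟨R₀, hR₀⟩ := eventually_atTop.1 (hy.and hgrowth)
  obtain ⟨R, hR, hMR⟩ := frequently_atTop.1 hM R₀
  have hderiv (r : ℝ) (hr : R ≤ r) : HasDerivAt y (y' r) r := (hR₀ r (hR.trans hr)).1
  have hlinear (r : ℝ) (hr : R ≤ r) : M + k / 2 * (r - R) ≤ y r := by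
    suffices -y r ≤ -(M + k / 2 * (r - R)) by linarith
    refine image_le_of_deriv_right_lt_deriv_boundary (a := R) (b := r) (f' := fun s ↦ -y' s)
      (B := fun s ↦ -(M + k / 2 * (s - R))) (B' := fun _ ↦ -(k / 2))
      (fun s hs ↦ (hderiv s hs.1).fun_neg.continuousAt.continuousWithinAt)
      (fun s hs ↦ (hderiv s hs.1).fun_neg.hasDerivWithinAt) (by simpa using hMR)
      (fun s ↦ ?_) (fun s hs heq ↦ ?_) ⟨hr, le_rfl⟩
    · simpa using ((((hasDerivAt_id s).sub_const R).const_mul (k / 2)).const_add M).fun_neg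
    · have hMs : M ≤ y s := by
        have : 0 ≤ k / 2 * (s - R) := mul_nonneg (half_pos hk).le (sub_nonneg.2 hs.1)
        linarith
      linarith [(hR₀ s (hR.trans hs.1)).2 hMs]
  refine tendsto_atTop_mono' atTop ((eventually_ge_atTop R).mono hlinear) ?_
  exact tendsto_atTop_add_const_left _ _
    ((tendsto_atTop_add_const_right _ _ tendsto_id).const_mul_atTop (half_pos hk))

lemma eventually_lt_of_rpow_le_deriv {y y' : ℝ → ℝ} {k M p : ℝ} (hk : 0 < k) (hM : 0 < M)
    (hp : 1 < p) (hy : ∀ᶠ r in atTop, HasDerivAt y (y' r) r)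
    (hgrowth : ∀ᶠ r in atTop, M ≤ y r → k * y r ^ p ≤ y' r) :
    ∀ᶠ r in atTop, y r < M := by
  by_contra hfreq
  simp only [not_eventually, not_lt] at hfreq
  have hylim : Tendsto y atTop atTop := by
    refine tendsto_atTop_of_eventually_le_deriv (k := k * M ^ p) (by positivity) hy ?_ hfreq
    filter_upwards [hgrowth] with r hr hMr
    exact le_trans (by gcongr) (hr hMr)
  -- `-y ^ (1 - p)` grows at least linearly although it tends to `0`.
  have hzlim : Tendsto (fun r ↦ -y r ^ (-(p - 1))) atTop (𝓝 0) := by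
    simpa using ((tendsto_rpow_neg_atTop (sub_pos.2 hp)).comp hylim).neg
  have hyM : ∀ᶠ r in atTop, M ≤ y r := hylim.eventually_ge_atTop M
  refine not_tendsto_nhds_of_tendsto_atTop
    (tendsto_atTop_of_eventually_le_deriv (M := -1) (k := (p - 1) * k)
      (y' := fun r ↦ -(y' r * -(p - 1) * y r ^ (-(p - 1) - 1)))
      (mul_pos (sub_pos.2 hp) hk) ?_ ?_ ?_) 0 hzlim
  · filter_upwards [hy, hyM] with r hr hMr
    exact (hr.rpow_const (Or.inl (hM.trans_le hMr).ne')).neg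
  · filter_upwards [hgrowth, hyM] with r hr hMr _
    have hyr : 0 < y r := hM.trans_le hMr
    have hcancel : y r ^ p * y r ^ (-(p - 1) - 1) = 1 := by
      rw [← rpow_add hyr]; simp
    calc (p - 1) * k = (p - 1) * (k * y r ^ p * y r ^ (-(p - 1) - 1)) := by
          rw [mul_assoc k, hcancel, mul_one]
      _ ≤ (p - 1) * (y' r * y r ^ (-(p - 1) - 1)) := by gcongr; exact hr hMr
      _ = _ := by ring
  · exact (hzlim.eventually_const_le (by norm_num)).frequently

section Riccati

variable {Y a b : ℝ → ℝ} {c p : ℝ}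

lemma eventually_gt_of_hasDerivAt_rpow_sub_one {η : ℝ} (hc : 0 < c) (hp : 1 ≤ p) (hη : η < 1)
    (hYpos : ∀ᶠ r in atTop, 0 < Y r)
    (hY : ∀ᶠ r in atTop, HasDerivAt Y (c * (Y r ^ p - 1) + a r * Y r + b r) r)
    (ha : Tendsto a atTop (𝓝 0)) (hb : Tendsto b atTop (𝓝 0)) :
    ∀ᶠ r in atTop, η < Y r := by
  have hab : Tendsto (fun r ↦ |a r| + |b r|) atTop (𝓝 0) := by simpa using ha.abs.add hb.abs
  by_contra hfreq
  simp only [not_eventually, not_lt] at hfreq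
  have hk : 0 < c * (1 - η) / 2 := by nlinarith
  have hlim : Tendsto (fun r ↦ -Y r) atTop atTop := by
    refine tendsto_atTop_of_eventually_le_deriv (M := -η) hk (hY.mono fun r hr ↦ hr.fun_neg) ?_
      (hfreq.mono fun r hr ↦ neg_le_neg hr)
    filter_upwards [hYpos, hab.eventually_le_const hk] with r hpos hsmall hle
    have hle_one : Y r ≤ 1 := by linarith
    have hrpow : c * (Y r ^ p - 1) ≤ c * (η - 1) := by
      gcongr
      linarith [rpow_le_self_of_le_one hpos.le hle_one hp]
    have haY : a r * Y r ≤ |a r| := by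
      nlinarith [le_abs_self (a r), abs_nonneg (a r)]
    linarith [le_abs_self (b r)]
  obtain ⟨r, hneg, hpos⟩ := ((hlim.eventually_gt_atTop 0).and hYpos).exists
  linarith

lemma eventually_lt_of_hasDerivAt_rpow_sub_one {η : ℝ} (hc : 0 < c) (hp : 1 < p) (hη : 1 < η)
    (hY : ∀ᶠ r in atTop, HasDerivAt Y (c * (Y r ^ p - 1) + a r * Y r + b r) r)
    (ha : Tendsto a atTop (𝓝 0)) (hb : Tendsto b atTop (𝓝 0)) :
    ∀ᶠ r in atTop, Y r < η := by
  have hab : Tendsto (fun r ↦ |a r| + |b r|) atTop (𝓝 0) := by simpa using ha.abs.add hb.abs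
  have hη0 : 0 < η := by linarith
  have hηp : η ^ (-p) < 1 := rpow_lt_one_of_one_lt_of_neg hη (by linarith)
  have hk : 0 < c * (1 - η ^ (-p)) / 2 := by nlinarith
  refine eventually_lt_of_rpow_le_deriv hk hη0 hp hY ?_
  filter_upwards [hab.eventually_le_const hk] with r hsmall hle
  have hone : 1 ≤ Y r := hη.le.trans hle
  have hone_le : 1 ≤ η ^ (-p) * Y r ^ p := by
    rw [rpow_neg hη0.le, inv_mul_eq_div, one_le_div (by positivity)]
    gcongr
  have hself : Y r ≤ Y r ^ p := self_le_rpow_of_one_le hone hp.le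
  have haY : -(|a r| * Y r ^ p) ≤ a r * Y r := by
    have : |a r * Y r| ≤ |a r| * Y r ^ p := by
      rw [abs_mul, abs_of_pos (by linarith : 0 < Y r)]
      gcongr
    exact (abs_le.1 this).1
  have hbY : -(|b r| * Y r ^ p) ≤ b r := by
    have : |b r| ≤ |b r| * Y r ^ p := le_mul_of_one_le_right (abs_nonneg _) (hone.trans hself)
    linarith [neg_abs_le (b r)]
  have hsum := mul_le_mul_of_nonneg_right hsmall (by linarith : 0 ≤ Y r ^ p)
  linarith [mul_le_mul_of_nonneg_left hone_le hc.le]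

lemma tendsto_one_of_hasDerivAt_rpow_sub_one (hc : 0 < c) (hp : 1 < p)
    (hYpos : ∀ᶠ r in atTop, 0 < Y r)
    (hY : ∀ᶠ r in atTop, HasDerivAt Y (c * (Y r ^ p - 1) + a r * Y r + b r) r)
    (ha : Tendsto a atTop (𝓝 0)) (hb : Tendsto b atTop (𝓝 0)) :
    Tendsto Y atTop (𝓝 1) :=
  tendsto_order.2
    ⟨fun _ hη ↦ eventually_gt_of_hasDerivAt_rpow_sub_one hc hp.le hη hYpos hY ha hb,
      fun _ hη ↦ eventually_lt_of_hasDerivAt_rpow_sub_one hc hp hη hY ha hb⟩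

end Riccati

lemma integrableAtFilter_of_le_deriv_add {φ ψ Z Z' : ℝ → ℝ}
    (hφ : ∀ᶠ r in atTop, ContinuousAt φ r) (hφ₀ : ∀ᶠ r in atTop, 0 ≤ φ r)
    (hZ : ∀ᶠ r in atTop, HasDerivAt Z (Z' r) r) (hZb : IsBoundedUnder (· ≤ ·) atTop Z)
    (hψ : IntegrableAtFilter ψ atTop) (hle : ∀ᶠ r in atTop, φ r ≤ Z' r + ψ r) :
    IntegrableAtFilter φ atTop := by
  obtain ⟨K, hK⟩ := hZb.eventually_le
  obtain ⟨S, hS⟩ := integrableAtFilter_atTop_iff.1 hψ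
  obtain ⟨R, hR⟩ := eventually_atTop.1 (hφ.and <| hφ₀.and <| hZ.and <| hle.and <|
    hK.and <| eventually_ge_atTop S)
  choose! hφ hφ₀ hZ hle hK hRS using hR
  have hψR : IntegrableOn ψ (Ioi R) := hS.mono_set fun r hr ↦ hRS r (le_of_lt hr)
  have hφint (b : ℝ) : IntegrableOn φ (Icc R b) :=
    ContinuousOn.integrableOn_Icc fun r hr ↦ (hφ r hr.1).continuousWithinAt
  refine ⟨Ioi R, Ioi_mem_atTop R, integrableOn_Ioi_of_intervalIntegral_norm_bounded
    (K - Z R + ∫ r in Ioi R, ‖ψ r‖) R (fun b ↦ (hφint b).mono_set Ioc_subset_Icc_self)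
    tendsto_id ?_⟩
  filter_upwards [eventually_ge_atTop R] with b hb
  have hψb : IntervalIntegrable ψ volume R b :=
    (intervalIntegrable_iff_integrableOn_Ioc_of_le hb).2 (hψR.mono_set Ioc_subset_Ioi_self)
  have hφb : IntervalIntegrable φ volume R b :=
    (intervalIntegrable_iff_integrableOn_Icc_of_le hb).2 (hφint b)
  have hZb : ∫ r in R..b, (φ r - ψ r) ≤ Z b - Z R :=
    intervalIntegral.integral_le_sub_of_hasDeriv_right_of_le hb
      (fun r hr ↦ (hZ r hr.1).continuousAt.continuousWithinAt)
      (fun r hr ↦ (hZ r hr.1.le).hasDerivWithinAt)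
      ((intervalIntegrable_iff_integrableOn_Icc_of_le hb).1 (hφb.sub hψb))
      (fun r hr ↦ sub_le_iff_le_add.2 (hle r hr.1.le))
  have hψ_le : ∫ r in R..b, ψ r ≤ ∫ r in Ioi R, ‖ψ r‖ := by
    rw [intervalIntegral.integral_of_le hb]
    calc ∫ r in Ioc R b, ψ r ≤ ∫ r in Ioc R b, ‖ψ r‖ :=
          (le_norm_self _).trans (norm_integral_le_integral_norm _)
      _ ≤ ∫ r in Ioi R, ‖ψ r‖ :=
          setIntegral_mono_set hψR.norm (.of_forall fun _ ↦ norm_nonneg _)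
            Ioc_subset_Ioi_self.eventuallyLE
  have hnorm : ∫ r in R..b, ‖φ r‖ = ∫ r in R..b, φ r :=
    intervalIntegral.integral_congr fun r hr ↦ by
      rw [uIcc_of_le hb] at hr
      exact norm_of_nonneg (hφ₀ r hr.1)
  rw [intervalIntegral.integral_sub hφb hψb] at hZb
  simp only [hnorm]
  linarith [hK b hb]

lemma exists_tendsto_of_hasDerivAt_of_isBigO {E : Type*} [NormedAddCommGroup E]
    [NormedSpace ℝ E] [CompleteSpace E] {F F' : ℝ → E} {G : ℝ → ℝ}
    (hF : ∀ᶠ r in atTop, HasDerivAt F (F' r) r) (hFG : F' =O[atTop] G)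
    (hG : IntegrableAtFilter G atTop) : ∃ l, Tendsto F atTop (𝓝 l) := by
  have hderiv : deriv F =ᶠ[atTop] F' := hF.mono fun r hr ↦ hr.deriv
  have hint : IntegrableAtFilter (deriv F) atTop :=
    (hFG.congr' hderiv.symm .rfl).integrableAtFilter
      ⟨univ, univ_mem, aestronglyMeasurable_deriv F _⟩ hG
  obtain ⟨R, hR⟩ := integrableAtFilter_atTop_iff.1 hint
  obtain ⟨S, hS⟩ := eventually_atTop.1 hF
  refine ⟨_, tendsto_limUnder_of_hasDerivAt_of_integrableOn_Ioi (a := max R S)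
    (fun r hr ↦ ?_) (hR.mono_set fun r hr ↦ ?_)⟩
  · exact (hS r ((le_max_right R S).trans (le_of_lt hr))).differentiableAt.hasDerivAt
  · exact (le_max_left R S).trans (le_of_lt hr)

lemma integrableAtFilter_rpow_of_mul_le_neg_deriv {w w' : ℝ → ℝ} {k δ : ℝ} (hk : 0 < k)
    (hδ : 0 < δ) (hw : ∀ᶠ r in atTop, HasDerivAt w (w' r) r) (hpos : ∀ᶠ r in atTop, 0 < w r)
    (hlim : Tendsto w atTop (𝓝 0)) (hdecay : ∀ᶠ r in atTop, k * w r ≤ -w' r) :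
    IntegrableAtFilter (fun r ↦ w r ^ δ) atTop := by
  have hbdd : IsBoundedUnder (· ≤ ·) atTop fun r ↦ -(k * δ)⁻¹ * w r ^ δ :=
    ((hlim.rpow_const (Or.inr hδ.le)).const_mul _).isBoundedUnder_le
  refine integrableAtFilter_of_le_deriv_add (ψ := 0)
    (Z' := fun r ↦ -(k * δ)⁻¹ * (w' r * δ * w r ^ (δ - 1))) ?_ ?_ ?_ hbdd
    integrableAtFilter_zero ?_
  · filter_upwards [hw, hpos] with r hr hwr using
      hr.continuousAt.rpow_const (Or.inl hwr.ne')
  · filter_upwards [hpos] with r hwr using by positivity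
  · filter_upwards [hw, hpos] with r hr hwr using
      (hr.rpow_const (Or.inl hwr.ne')).const_mul _
  · filter_upwards [hpos, hdecay] with r hwr hle
    have hpow : w r * w r ^ (δ - 1) = w r ^ δ := by
      rw [rpow_sub_one hwr.ne', mul_div_cancel₀ _ hwr.ne']
    calc w r ^ δ = k⁻¹ * (k * w r * w r ^ (δ - 1)) := by rw [mul_assoc, hpow]; field_simp
      _ ≤ k⁻¹ * (-w' r * w r ^ (δ - 1)) := by gcongr
      _ = _ := by simp only [Pi.zero_apply, add_zero]; field_simp

lemma integrableAtFilter_sq_sub_one_of_hasDerivAt {Y h H : ℝ → ℝ} {c p : ℝ} (hc : 0 < c)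
    (hp : 1 ≤ p)
    (hY : ∀ᶠ r in atTop, HasDerivAt Y (c * (Y r ^ p - 1) + h r) r)
    (hlim : Tendsto Y atTop (𝓝 1)) (hh : (fun r ↦ h r ^ 2) =O[atTop] H)
    (hH : IntegrableAtFilter H atTop) :
    IntegrableAtFilter (fun r ↦ (Y r - 1) ^ 2) atTop := by
  obtain ⟨K, hK⟩ := hh.bound
  have hbdd : IsBoundedUnder (· ≤ ·) atTop fun r ↦ c⁻¹ * (Y r - 1) ^ 2 :=
    (((hlim.sub_const 1).pow 2).const_mul _).isBoundedUnder_le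
  refine integrableAtFilter_of_le_deriv_add (ψ := (c⁻¹ ^ 2 * K) • fun r ↦ ‖H r‖)
    (Z' := fun r ↦ c⁻¹ * (2 * (Y r - 1) * (c * (Y r ^ p - 1) + h r))) ?_
    (.of_forall fun r ↦ sq_nonneg _) ?_ hbdd (hH.norm.smul _) ?_
  · exact hY.mono fun r hr ↦ (hr.continuousAt.sub_const 1).pow 2
  · filter_upwards [hY] with r hr
    simpa using ((hr.sub_const 1).fun_pow 2).const_mul c⁻¹
  · filter_upwards [hK, hlim.eventually_const_lt one_pos] with r hhr hYr
    have hmono : (Y r - 1) ^ 2 ≤ (Y r - 1) * (Y r ^ p - 1) := by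
      rcases le_total 1 (Y r) with hone | hone
      · nlinarith [self_le_rpow_of_one_le hone hp]
      · nlinarith [rpow_le_self_of_le_one hYr.le hone hp]
    have hyoung : -((Y r - 1) ^ 2 + (c⁻¹ * h r) ^ 2) ≤ 2 * (Y r - 1) * (c⁻¹ * h r) := by
      nlinarith [sq_nonneg (Y r - 1 + c⁻¹ * h r)]
    have hh_sq : (c⁻¹ * h r) ^ 2 ≤ c⁻¹ ^ 2 * K * ‖H r‖ := by
      rw [mul_pow, mul_assoc]
      gcongr
      exact (le_norm_self _).trans hhr
    have hderiv : c⁻¹ * (2 * (Y r - 1) * (c * (Y r ^ p - 1) + h r)) =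
        2 * ((Y r - 1) * (Y r ^ p - 1)) + 2 * (Y r - 1) * (c⁻¹ * h r) := by field_simp
    simp only [hderiv, Pi.smul_apply, smul_eq_mul]
    linarith

lemma integrableAtFilter_inv_sq : IntegrableAtFilter (fun r : ℝ ↦ r⁻¹ ^ 2) atTop := by
  refine ⟨Ioi 1, Ioi_mem_atTop 1, (integrableOn_Ioi_rpow_of_lt (a := -2) (by norm_num)
    one_pos).congr_fun (fun r hr ↦ ?_) measurableSet_Ioi⟩
  simp only [rpow_neg (one_pos.trans hr).le, rpow_two, inv_pow]

section NormalizedRiccati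

variable {Y g G : ℝ → ℝ} {c q n : ℝ}

lemma integrableAtFilter_sq_sub_one_of_riccati (hc : 0 < c) (hq : 0 < q)
    (hY : ∀ᶠ r in atTop,
      HasDerivAt Y (c * (Y r ^ (1 + q) - 1) - n / r * Y r + c * g r) r)
    (hYlim : Tendsto Y atTop (𝓝 1)) (hg : Tendsto g atTop (𝓝 0)) (hgG : g =O[atTop] G)
    (hG : IntegrableAtFilter G atTop) :
    IntegrableAtFilter (fun r ↦ (Y r - 1) ^ 2) atTop := by
  have hH : IntegrableAtFilter ((fun r ↦ r⁻¹ ^ 2) + fun r ↦ ‖G r‖) atTop :=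
    integrableAtFilter_inv_sq.add hG.norm
  refine integrableAtFilter_sq_sub_one_of_hasDerivAt (h := fun r ↦ c * g r - n * (r⁻¹ * Y r)) hc
    (by linarith : 1 ≤ 1 + q) (hY.mono fun r hr ↦ hr.congr_deriv (by ring)) hYlim ?_ hH
  have hgsq : (fun r ↦ g r ^ 2) =O[atTop] G := by
    simpa only [sq, one_mul] using (hg.isBigO_one ℝ).mul hgG
  have hYsq : (fun r ↦ (r⁻¹ * Y r) ^ 2) =O[atTop] fun r ↦ r⁻¹ ^ 2 := by
    simpa only [mul_one] using
      ((isBigO_refl (fun r : ℝ ↦ r⁻¹) atTop).mul (hYlim.isBigO_one ℝ)).pow 2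
  have hGH : G =O[atTop] ((fun r ↦ r⁻¹ ^ 2) + fun r ↦ ‖G r‖) := isBigO_of_le _ fun r ↦
    (le_add_of_nonneg_left (sq_nonneg r⁻¹)).trans (le_norm_self _)
  have hinvH : (fun r : ℝ ↦ r⁻¹ ^ 2) =O[atTop] ((fun r ↦ r⁻¹ ^ 2) + fun r ↦ ‖G r‖) :=
    isBigO_of_le _ fun r ↦ by
      rw [norm_of_nonneg (sq_nonneg _)]
      exact (le_add_of_nonneg_right (norm_nonneg (G r))).trans (le_norm_self _)
  refine (isBigO_of_le _ fun r ↦ ?_).trans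
    (((hgsq.trans hGH).const_mul_left (2 * c ^ 2)).add
      ((hYsq.trans hinvH).const_mul_left (2 * n ^ 2)))
  rw [norm_of_nonneg (by positivity), norm_of_nonneg (by positivity)]
  linarith [sq_nonneg (c * g r + n * (r⁻¹ * Y r))]

lemma hasDerivAt_add_log_add_mul_riccati {L : ℝ → ℝ} {k κ r : ℝ} (hκ : κ * c * (1 + q) = k * q)
    (hr : r ≠ 0) (hY : HasDerivAt Y (c * (Y r ^ (1 + q) - 1) - n / r * Y r + c * g r) r)
    (hL : HasDerivAt L (-(k * Y r ^ q)) r) :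
    HasDerivAt (fun r ↦ L r + k * r + κ * n * log r + κ * Y r)
      (-k * (Y r ^ q - 1 - q * (Y r - 1)) + κ * c * (Y r ^ (1 + q) - 1 - (1 + q) * (Y r - 1)) -
        κ * n * (r⁻¹ * (Y r - 1)) + κ * c * g r) r := by
  refine (((hL.add ((hasDerivAt_id r).const_mul k)).add
    ((hasDerivAt_log hr).const_mul (κ * n))).add (hY.const_mul κ)).congr_deriv ?_
  rw [div_eq_mul_inv]
  linear_combination (Y r - 1) * hκ

lemma exists_tendsto_add_log_of_riccati {L : ℝ → ℝ} {k : ℝ} (hc : 0 < c) (hq : 0 < q)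
    (hY : ∀ᶠ r in atTop,
      HasDerivAt Y (c * (Y r ^ (1 + q) - 1) - n / r * Y r + c * g r) r)
    (hYlim : Tendsto Y atTop (𝓝 1)) (hg : Tendsto g atTop (𝓝 0)) (hgG : g =O[atTop] G)
    (hG : IntegrableAtFilter G atTop)
    (hL : ∀ᶠ r in atTop, HasDerivAt L (-(k * Y r ^ q)) r) :
    ∃ l, Tendsto (fun r ↦ L r + k * r + k * q / (c * (1 + q)) * n * log r) atTop (𝓝 l) := by
  set κ := k * q / (c * (1 + q)) with hκ
  have hκc : κ * c * (1 + q) = k * q := by rw [hκ]; field_simp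
  have hF := (hL.and (hY.and (eventually_ne_atTop 0))).mono fun r ⟨hLr, hYr, hr⟩ ↦
    hasDerivAt_add_log_add_mul_riccati hκc hr hYr hLr
  have hsq := integrableAtFilter_sq_sub_one_of_riccati hc hq hY hYlim hg hgG hG
  set E : ℝ → ℝ := fun r ↦ (Y r - 1) ^ 2 + r⁻¹ ^ 2 + ‖G r‖
  have hE : IntegrableAtFilter E atTop := (hsq.add integrableAtFilter_inv_sq).add hG.norm
  have hsqE : (fun r ↦ (Y r - 1) ^ 2) =O[atTop] E := isBigO_of_le _ fun r ↦ by
    rw [norm_of_nonneg (by positivity), norm_of_nonneg (by positivity)]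
    linarith [sq_nonneg r⁻¹, norm_nonneg (G r)]
  have hmulE : (fun r ↦ r⁻¹ * (Y r - 1)) =O[atTop] E := isBigO_of_le _ fun r ↦ by
    rw [norm_of_nonneg (by positivity : 0 ≤ E r), Real.norm_eq_abs, abs_le]
    constructor <;> nlinarith [sq_nonneg (r⁻¹ + (Y r - 1)), sq_nonneg (r⁻¹ - (Y r - 1)),
      sq_nonneg r⁻¹, sq_nonneg (Y r - 1), norm_nonneg (G r)]
  have hgE : g =O[atTop] E := hgG.trans <| isBigO_of_le _ fun r ↦ by
    rw [norm_of_nonneg (by positivity : 0 ≤ E r)]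
    linarith [sq_nonneg r⁻¹, sq_nonneg (Y r - 1)]
  have hrpowE (s : ℝ) : (fun r ↦ Y r ^ s - 1 - s * (Y r - 1)) =O[atTop] E :=
    ((isBigO_rpow_sub_one_sub_mul s).comp_tendsto hYlim).trans hsqE
  obtain ⟨l, hl⟩ := exists_tendsto_of_hasDerivAt_of_isBigO hF
    (((((hrpowE q).const_mul_left _).add ((hrpowE (1 + q)).const_mul_left _)).sub
      (hmulE.const_mul_left _)).add (hgE.const_mul_left _)) hE
  exact ⟨l - κ * 1, (hl.sub (hYlim.const_mul κ)).congr fun r ↦ add_sub_cancel_right _ _⟩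

end NormalizedRiccati

/-- The exponential decay rate `λ` of `w`: the positive root of `(m - 1) λ ^ m = 1`. -/
noncomputable def decayRate (m : ℝ) : ℝ := (1 / (m - 1)) ^ (1 / m)

lemma decayRate_pos {m : ℝ} (hm : 1 < m) : 0 < decayRate m :=
  rpow_pos_of_pos (one_div_pos.2 (sub_pos.2 hm)) _

lemma decayRate_rpow_sub_one {m : ℝ} (hm : 1 < m) :
    decayRate m ^ (m - 1) = ((m - 1) * decayRate m)⁻¹ := by
  have hm0 : m ≠ 0 := by linarith
  have hm1 : 0 < m - 1 := sub_pos.2 hm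
  have hrpow : decayRate m ^ m = 1 / (m - 1) := by
    rw [decayRate, ← rpow_mul (by positivity), one_div_mul_cancel hm0, rpow_one]
  rw [rpow_sub_one (decayRate_pos hm).ne', hrpow]
  field_simp

/-- Near infinity, `w` is positive with derivative `w' < 0`, tends to `0`, and is a radial solution
of `Δ_m w - w ^ (m - 1) + f(w) = 0` in dimension `N`. The derivative is carried as a separate
function, and all conditions are imposed only for large radii. -/
structure IsDecayingRadialSolution (m N : ℝ) (f w w' : ℝ → ℝ) : Prop where
  hasDerivAt : ∀ᶠ r in atTop, HasDerivAt w (w' r) r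
  pos : ∀ᶠ r in atTop, 0 < w r
  deriv_neg : ∀ᶠ r in atTop, w' r < 0
  tendsto_zero : Tendsto w atTop (𝓝 0)
  hasDerivAt_flux : ∀ᶠ r in atTop,
    HasDerivAt (fun ρ ↦ ρ ^ (N - 1) * |w' ρ| ^ (m - 2) * w' ρ)
      (r ^ (N - 1) * (w r ^ (m - 1) - f (w r))) r

/-- The `(m - 1)`-st power of the logarithmic decay rate `-w' / w`, normalised by `decayRate m`: the
unknown of the Riccati equation satisfied by a radial solution, with equilibrium `1` at infinity. -/
noncomputable def riccatiVariable (m : ℝ) (w w' : ℝ → ℝ) (r : ℝ) : ℝ :=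
  (-w' r / w r / decayRate m) ^ (m - 1)

lemma decayRate_mul_riccatiVariable_rpow {m : ℝ} (hm : 1 < m) {w w' : ℝ → ℝ} {r : ℝ}
    (hw : 0 < w r) (hw' : w' r < 0) :
    decayRate m * riccatiVariable m w w' r ^ (m - 1)⁻¹ = -w' r / w r := by
  have hrate := decayRate_pos hm
  have hw'_neg : 0 < -w' r := neg_pos.2 hw'
  rw [riccatiVariable, rpow_rpow_inv (by positivity) (sub_pos.2 hm).ne',
    mul_div_cancel₀ _ hrate.ne']

lemma riccatiVariable_eq_flux_div {m : ℝ} (N : ℝ) {w w' : ℝ → ℝ} {r : ℝ} (hm : 1 < m) (hr : 0 < r)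
    (hw : 0 < w r) (hw' : w' r < 0) :
    riccatiVariable m w w' r = (m - 1) * decayRate m *
      -(r ^ (N - 1) * |w' r| ^ (m - 2) * w' r) / (r ^ (N - 1) * w r ^ (m - 1)) := by
  have hrate := decayRate_pos hm
  have hw'_neg : 0 < -w' r := neg_pos.2 hw'
  have hm1 : 0 < m - 1 := sub_pos.2 hm
  have hpow : |w' r| ^ (m - 2) * w' r = -(-w' r) ^ (m - 1) := by
    rw [abs_of_neg hw', show m - 1 = m - 2 + 1 by ring, rpow_add_one hw'_neg.ne']
    ring
  rw [riccatiVariable, div_rpow (by positivity) hrate.le, div_rpow hw'_neg.le hw.le,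
    decayRate_rpow_sub_one hm, mul_assoc (r ^ _), hpow]
  field_simp

namespace IsDecayingRadialSolution

variable {m N δ : ℝ} {f w w' : ℝ → ℝ}

lemma eventually_riccatiVariable_pos (h : IsDecayingRadialSolution m N f w w') (hm : 1 < m) :
    ∀ᶠ r in atTop, 0 < riccatiVariable m w w' r := by
  filter_upwards [h.pos, h.deriv_neg] with r hw hw'
  have := decayRate_pos hm
  have := neg_pos.2 hw'
  rw [riccatiVariable]
  positivity

lemma eventually_hasDerivAt_log (h : IsDecayingRadialSolution m N f w w') (hm : 1 < m) :
    ∀ᶠ r in atTop, HasDerivAt (fun r ↦ log (w r))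
      (-(decayRate m * riccatiVariable m w w' r ^ (m - 1)⁻¹)) r := by
  filter_upwards [h.hasDerivAt, h.pos, h.deriv_neg] with r hr hw hw'
  rw [decayRate_mul_riccatiVariable_rpow hm hw hw', neg_div, neg_neg]
  exact hr.log hw.ne'

lemma isBigO_div_rpow (h : IsDecayingRadialSolution m N f w w')
    (hf : f =O[𝓝[>] 0] fun t ↦ t ^ (m - 1 + δ)) :
    (fun r ↦ f (w r) / w r ^ (m - 1)) =O[atTop] fun r ↦ w r ^ δ := by
  have hw : Tendsto w atTop (𝓝[>] 0) := tendsto_nhdsWithin_iff.2 ⟨h.tendsto_zero, h.pos⟩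
  refine ((hf.comp_tendsto hw).mul (isBigO_refl (fun r ↦ (w r ^ (m - 1))⁻¹) atTop)).congr'
    (.of_forall fun r ↦ rfl) ?_
  filter_upwards [h.pos] with r hr
  have := (rpow_pos_of_pos hr (m - 1)).ne'
  simp only [Function.comp_apply, rpow_add hr]
  field_simp

lemma eventually_hasDerivAt_riccatiVariable (h : IsDecayingRadialSolution m N f w w')
    (hm : 1 < m) :
    ∀ᶠ r in atTop, HasDerivAt (riccatiVariable m w w')
      ((m - 1) * decayRate m * (riccatiVariable m w w' r ^ (1 + (m - 1)⁻¹) - 1) -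
        (N - 1) / r * riccatiVariable m w w' r +
        (m - 1) * decayRate m * (f (w r) / w r ^ (m - 1))) r := by
  have heq : ∀ᶠ r in atTop, riccatiVariable m w w' r = (m - 1) * decayRate m *
      -(r ^ (N - 1) * |w' r| ^ (m - 2) * w' r) / (r ^ (N - 1) * w r ^ (m - 1)) := by
    filter_upwards [eventually_gt_atTop 0, h.pos, h.deriv_neg] with r using
      riccatiVariable_eq_flux_div N hm
  filter_upwards [eventually_atTop_eventually_nhds heq, eventually_gt_atTop 0, h.hasDerivAt, h.pos,
    h.deriv_neg, h.hasDerivAt_flux, h.eventually_riccatiVariable_pos hm] with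
    r heq hr hderiv hw hw' hflux hYpos
  have hw'_eq : w' r = -(decayRate m * riccatiVariable m w w' r ^ (m - 1)⁻¹ * w r) := by
    rw [decayRate_mul_riccatiVariable_rpow hm hw hw']
    field_simp
  have hDpos : 0 < r ^ (N - 1) * w r ^ (m - 1) := by positivity
  have hD : HasDerivAt (fun ρ ↦ ρ ^ (N - 1) * w ρ ^ (m - 1)) (r ^ (N - 1) * w r ^ (m - 1) *
      ((N - 1) / r - (m - 1) * decayRate m * riccatiVariable m w w' r ^ (m - 1)⁻¹)) r := by
    refine ((hasDerivAt_rpow_const (Or.inl hr.ne')).mul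
      (hderiv.rpow_const (Or.inl hw.ne'))).congr_deriv ?_
    rw [hw'_eq, rpow_sub_one hr.ne' (N - 1), rpow_sub_one hw.ne' (m - 1)]
    field_simp
    ring
  have hA := hflux.fun_neg.const_mul ((m - 1) * decayRate m)
  refine ((hA.fun_div hD hDpos.ne').congr_of_eventuallyEq heq).congr_deriv ?_
  rw [← (eq_div_iff hDpos.ne').1 heq.self_of_nhds, rpow_one_add' hYpos.le (by positivity)]
  field_simp
  ring

lemma tendsto_div_rpow (h : IsDecayingRadialSolution m N f w w') (hδ : 0 < δ)
    (hf : f =O[𝓝[>] 0] fun t ↦ t ^ (m - 1 + δ)) :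
    Tendsto (fun r ↦ f (w r) / w r ^ (m - 1)) atTop (𝓝 0) := by
  refine (h.isBigO_div_rpow hf).trans_tendsto ?_
  simpa [hδ.ne'] using h.tendsto_zero.rpow_const (Or.inr hδ.le)

lemma tendsto_riccatiVariable (h : IsDecayingRadialSolution m N f w w') (hm : 1 < m)
    (hδ : 0 < δ) (hf : f =O[𝓝[>] 0] fun t ↦ t ^ (m - 1 + δ)) :
    Tendsto (riccatiVariable m w w') atTop (𝓝 1) := by
  have hm1 : 0 < m - 1 := sub_pos.2 hm
  have hc : 0 < (m - 1) * decayRate m := mul_pos hm1 (decayRate_pos hm)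
  refine tendsto_one_of_hasDerivAt_rpow_sub_one (a := fun r ↦ -((N - 1) / r))
    (b := fun r ↦ (m - 1) * decayRate m * (f (w r) / w r ^ (m - 1))) hc
    (lt_add_of_pos_right 1 (inv_pos.2 hm1)) (h.eventually_riccatiVariable_pos hm)
    ((h.eventually_hasDerivAt_riccatiVariable hm).mono fun r hr ↦ hr.congr_deriv (by ring)) ?_ ?_
  · simpa using (tendsto_const_nhds.div_atTop (tendsto_id (α := ℝ))).neg
  · simpa using (h.tendsto_div_rpow hδ hf).const_mul ((m - 1) * decayRate m)

lemma integrableAtFilter_rpow (h : IsDecayingRadialSolution m N f w w') (hm : 1 < m)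
    (hδ : 0 < δ) (hf : f =O[𝓝[>] 0] fun t ↦ t ^ (m - 1 + δ)) :
    IntegrableAtFilter (fun r ↦ w r ^ δ) atTop := by
  have hrate := decayRate_pos hm
  have hlim : Tendsto (fun r ↦ decayRate m * riccatiVariable m w w' r ^ (m - 1)⁻¹) atTop
      (𝓝 (decayRate m)) := by
    simpa using ((h.tendsto_riccatiVariable hm hδ hf).rpow_const (p := (m - 1)⁻¹)
      (Or.inl one_ne_zero)).const_mul (decayRate m)
  refine integrableAtFilter_rpow_of_mul_le_neg_deriv (half_pos hrate) hδ h.hasDerivAt h.pos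
    h.tendsto_zero ?_
  filter_upwards [hlim.eventually_const_le (half_lt_self hrate), h.pos, h.deriv_neg] with
    r hle hw hw'
  rwa [decayRate_mul_riccatiVariable_rpow hm hw hw', le_div_iff₀ hw] at hle

lemma exists_tendsto_log (h : IsDecayingRadialSolution m N f w w') (hm : 1 < m)
    (hδ : 0 < δ) (hf : f =O[𝓝[>] 0] fun t ↦ t ^ (m - 1 + δ)) :
    ∃ l, Tendsto (fun r ↦ log (w r) + decayRate m * r + (N - 1) / (m * (m - 1)) * log r)
      atTop (𝓝 l) := by
  have hm1 : 0 < m - 1 := sub_pos.2 hm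
  have hrate := decayRate_pos hm
  have hcoeff : decayRate m * (m - 1)⁻¹ / ((m - 1) * decayRate m * (1 + (m - 1)⁻¹)) * (N - 1) =
      (N - 1) / (m * (m - 1)) := by
    have : m ≠ 0 := by linarith
    have : 1 + (m - 1)⁻¹ = m / (m - 1) := by field_simp; ring
    rw [this]; field_simp
  simpa only [hcoeff] using exists_tendsto_add_log_of_riccati (mul_pos hm1 hrate) (inv_pos.2 hm1)
    (h.eventually_hasDerivAt_riccatiVariable hm) (h.tendsto_riccatiVariable hm hδ hf)
    (h.tendsto_div_rpow hδ hf) (h.isBigO_div_rpow hf) (h.integrableAtFilter_rpow hm hδ hf)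
    (h.eventually_hasDerivAt_log hm)

end IsDecayingRadialSolution

theorem stmt_1_general {m N δ : ℝ} {f w w' : ℝ → ℝ} (hm : 1 < m) (hδ : 0 < δ)
    (hf : f =O[𝓝[>] 0] fun t ↦ t ^ (m - 1 + δ)) (h : IsDecayingRadialSolution m N f w w') :
    ∃ C₀ > (0 : ℝ), Tendsto
      (fun r ↦ w r * r ^ ((N - 1) / (m * (m - 1))) * exp ((1 / (m - 1)) ^ (1 / m) * r))
      atTop (𝓝 C₀) := by
  obtain ⟨l, hl⟩ := h.exists_tendsto_log hm hδ hf
  refine ⟨exp l, exp_pos l, ((continuous_exp.tendsto l).comp hl).congr' ?_⟩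
  filter_upwards [h.pos, eventually_gt_atTop 0] with r hw hr
  rw [Function.comp_apply, exp_add, exp_add, exp_log hw, mul_comm _ (log r), ← rpow_def_of_pos hr,
    mul_right_comm, decayRate]

/-- Proposition 1(ii), precise exponential asymptotics of a radial ground state of
`Δ_m w - w^(m-1) + f(w) = 0` in `ℝ^N`. -/
theorem stmt_1 (m N : ℝ) (hm : 2 ≤ m) (hmN : m < N)
    (f : ℝ → ℝ) (hf_cont : Continuous f) (hf_zero : ∀ t ≤ (0:ℝ), f t = 0)
    (C δ t₀ : ℝ) (hC : 0 < C) (hδ : 0 < δ) (ht₀ : 0 < t₀)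
    (hf_bound : ∀ t : ℝ, 0 < t → t ≤ t₀ → 0 ≤ f t ∧ f t ≤ C * t ^ (m - 1 + δ))
    (w w' : ℝ → ℝ)
    (hw_deriv : ∀ r > (0:ℝ), HasDerivAt w (w' r) r)
    (hw'_cont : ContinuousOn w' (Ioi 0))
    (hw_pos : ∀ r > (0:ℝ), 0 < w r)
    (hw'_neg : ∀ r > (0:ℝ), w' r < 0)
    (hw_lim : Tendsto w atTop (𝓝 0))
    (hODE : ∀ r > (0:ℝ),
      HasDerivAt (fun ρ : ℝ => ρ ^ (N - 1) * |w' ρ| ^ (m - 2) * w' ρ)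
        (r ^ (N - 1) * ((w r) ^ (m - 1) - f (w r))) r) :
    ∃ C₀ > (0:ℝ), Tendsto
      (fun r => w r * r ^ ((N - 1) / (m * (m - 1))) * Real.exp ((1 / (m - 1)) ^ (1 / m) * r))
      atTop (𝓝 C₀) := by
  have hf : f =O[𝓝[>] 0] fun t ↦ t ^ (m - 1 + δ) := by
    refine .of_bound C ?_
    filter_upwards [Ioc_mem_nhdsGT ht₀] with t ht
    obtain ⟨hf0, hfC⟩ := hf_bound t ht.1 ht.2
    rwa [norm_of_nonneg hf0, norm_of_nonneg (rpow_nonneg ht.1.le _)]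
  have hpos : ∀ᶠ r : ℝ in atTop, r > 0 := eventually_gt_atTop 0
  exact stmt_1_general (by linarith) hδ hf ⟨hpos.mono hw_deriv, hpos.mono hw_pos,
    hpos.mono hw'_neg, hw_lim, hpos.mono hODE⟩
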